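/- Fix integers r ≥ 2, d_0 ≥ 2, and i ≥ 1. Then the width d_i = 2d_0 − 2 is an asymptotic bottleneck: there exists h̃ (with h̃ ≥ i) such that for all h > h̃ and for all positive integers d_1, …, d_{i−1}, d_{i+1}, …, d_h, the architecture (d_0, d_1, …, d_{i−1}, 2d_0 − 2, d_{i+1}, …, d_h) is non-filling; that is, there exists a nonzero real polynomial in the coefficients (a nonzero polynomial function on Sym_{r^{h−1}}(ℝ^{d_0})^{d_h}) that vanishes identically on the functional space F_{(d_0,…,d_h),r}. -/

import Mathlib

/-- The polynomial network map: `net r d W h` is the tuple of `d h` homogeneous polynomials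
in `d 0` variables computed by the network with architecture `(d 0, …, d h)`, activation
`ρ_r` (coordinatewise `r`-th power), and weight matrices `W j ∈ ℝ^{d (j+1) × d j}`. -/
noncomputable def net (r : ℕ) (d : ℕ → ℕ)
    (W : ∀ j : ℕ, Matrix (Fin (d (j + 1))) (Fin (d j)) ℝ) :
    (h : ℕ) → Fin (d h) → MvPolynomial (Fin (d 0)) ℝ
  | 0 => fun i => MvPolynomial.X i
  | h + 1 => fun i => ∑ k : Fin (d h), MvPolynomial.C (W h i k) *
      net r d W h k ^ (if h = 0 then 1 else r)

open MvPolynomial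

/-- Over an algebraically closed field, fewer polynomials than variables, all vanishing at the
origin, have a common zero away from the origin. -/
theorem MvPolynomial.exists_ne_zero_forall_eval_eq_zero {K σ ι : Type*} [Field K] [IsAlgClosed K]
    [Finite σ] [Finite ι] (hcard : Nat.card ι < Nat.card σ) (F : ι → MvPolynomial σ K)
    (hF : ∀ i, eval 0 (F i) = 0) : ∃ x : σ → K, x ≠ 0 ∧ ∀ i, eval x (F i) = 0 := by
  by_contra! hcon
  have hzero : zeroLocus K (Ideal.span (Set.range F)) = {0} := by
    ext x
    simp only [zeroLocus_span, Set.mem_ofPred_eq, Set.forall_mem_range, Set.mem_singleton_iff,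
      aeval_eq_eval]
    constructor
    · intro hx
      by_contra hne
      obtain ⟨i, hi⟩ := hcon x hne
      exact hi (hx i)
    · rintro rfl i
      exact hF i
  have hrad : vanishingIdeal K {(0 : σ → K)} = (Ideal.span (Set.range F)).radical := by
    rw [← hzero, vanishingIdeal_zeroLocus_eq_radical]
  have hmin : vanishingIdeal K {(0 : σ → K)} ∈ (Ideal.span (Set.range F)).minimalPrimes := by
    rw [← Ideal.radical_minimalPrimes, ← hrad, Ideal.minimalPrimes_eq_subsingleton_self]
    rfl
  have hle := Ideal.height_le_card_of_mem_minimalPrimes_span (Set.finite_range F) hmin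
  have hheight : ∀ I : Ideal (MvPolynomial σ K), I.IsMaximal →
      I.height ≤ (vanishingIdeal K {(0 : σ → K)}).height := by
    intro I hI
    obtain ⟨x, rfl⟩ := isMaximal_iff_eq_vanishingIdeal_singleton.mp hI
    let e : MvPolynomial σ K ≃ₐ[K] MvPolynomial σ K := AlgEquiv.ofAlgHom
      (aeval fun a => X a + C (x a)) (aeval fun a => X a - C (x a))
      (by ext; simp) (by ext; simp)
    rw [← RingEquiv.height_comap e.toRingEquiv (vanishingIdeal K {0})]
    refine le_of_eq (congrArg _ ?_)
    ext p
    have : (aeval (0 : σ → K)).comp e.toAlgHom = aeval x := by ext; simp [e]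
    simpa [mem_vanishingIdeal_singleton_iff] using
      (congrArg (· = 0) (DFunLike.congr_fun this p)).symm
  have hdim : ringKrullDim (MvPolynomial σ K) ≤ (Nat.card ι : WithBot ℕ∞) := by
    rw [← Ideal.sup_isMaximal_height_eq_ringKrullDim]
    have : (⨆ (I : Ideal (MvPolynomial σ K)) (_ : I.IsMaximal), I.height) ≤ (Nat.card ι : ℕ∞) := by
      refine iSup₂_le fun I hI => (hheight I hI).trans (hle.trans ?_)
      rw [← Nat.card_coe_set_eq]
      exact_mod_cast Finite.card_range_le F
    exact_mod_cast this
  simp only [MvPolynomial.ringKrullDim_of_isNoetherianRing, ringKrullDim_eq_zero_of_field,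
    zero_add] at hdim
  exact absurd (by exact_mod_cast hdim) (not_le.mpr hcard)

/-- If a field extension `K` of `k` has transcendence degree at most `M`, then for every
`K`-subspace of `K^T` of codimension more than `M` there is a nonzero polynomial over `k`
vanishing on it. -/
theorem exists_ne_zero_aeval_eq_zero_of_finrank_add_lt {k K T : Type} [Field k] [Field K]
    [Algebra k K] [Fintype T] {M : ℕ} (hM : Algebra.trdeg k K ≤ M) (U : Submodule K (T → K))
    (hU : Module.finrank K U + M < Fintype.card T) :
    ∃ q : MvPolynomial T k, q ≠ 0 ∧ ∀ u ∈ U, aeval u q = 0 := by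
  let b := Module.finBasis K U
  let z : T → MvPolynomial (Fin (Module.finrank K U)) K := fun t =>
    ∑ l, X l * C ((b l : T → K) t)
  have hz : ¬ AlgebraicIndependent k z := by
    intro hind
    have h1 := hind.cardinalMk_le_trdeg
    rw [← trdeg_add_eq k K, MvPolynomial.trdeg_of_isDomain] at h1
    rw [Cardinal.mk_fintype, Cardinal.mk_fin, Cardinal.lift_natCast] at h1
    have h2 : (Fintype.card T : Cardinal) ≤ (M : Cardinal) + (Module.finrank K U : ℕ) :=
      h1.trans (add_le_add hM le_rfl)
    have h3 : Fintype.card T ≤ M + Module.finrank K U := by exact_mod_cast h2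
    omega
  rw [algebraicIndependent_iff] at hz
  push Not at hz
  obtain ⟨q, hq, hq0⟩ := hz
  refine ⟨q, hq0, fun u hu => ?_⟩
  have hcomp : aeval u = ((aeval (R := K) fun l => b.repr ⟨u, hu⟩ l).restrictScalars k).comp
      (aeval (R := k) z) := by
    ext t
    have := congrFun (congrArg Subtype.val (b.sum_repr ⟨u, hu⟩)) t
    simp only [AddSubmonoidClass.coe_finsetSum, SetLike.val_smul, Finset.sum_apply,
      Pi.smul_apply, smul_eq_mul] at this
    simp [z, this]
  rw [hcomp, AlgHom.comp_apply, hq, map_zero]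

section
variable {K : Type*} [Field K] {n : ℕ}

/-- The derivative of `f` at `x` in direction `v`, as a linear functional of `f`. -/
noncomputable def dirDeriv (x v : Fin n → K) : MvPolynomial (Fin n) K →ₗ[K] K :=
  ∑ a, v a • (aeval x).toLinearMap ∘ₗ (pderiv a).toLinearMap

theorem dirDeriv_apply (x v : Fin n → K) (f : MvPolynomial (Fin n) K) :
    dirDeriv x v f = ∑ a, v a * eval x (pderiv a f) := by
  simp [dirDeriv, LinearMap.sum_apply, aeval_eq_eval]

theorem dirDeriv_mul (x v : Fin n → K) (f g : MvPolynomial (Fin n) K) :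
    dirDeriv x v (f * g) = dirDeriv x v f * eval x g + eval x f * dirDeriv x v g := by
  simp only [dirDeriv_apply, pderiv_mul, map_add, map_mul, mul_add, Finset.sum_add_distrib,
    Finset.sum_mul, Finset.mul_sum]
  congr 1 <;> exact Finset.sum_congr rfl fun _ _ => by ring

theorem dirDeriv_pow_succ (x v : Fin n → K) (f : MvPolynomial (Fin n) K) (m : ℕ) :
    dirDeriv x v (f ^ (m + 1)) = (m + 1) * eval x f ^ m * dirDeriv x v f := by
  induction m with
  | zero => simp
  | succ m ih => rw [pow_succ, dirDeriv_mul, ih]; simp; ring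

theorem dirDeriv_self (x : Fin n → K) {f : MvPolynomial (Fin n) K} {m : ℕ}
    (hf : f.IsHomogeneous m) : dirDeriv x x f = m * eval x f := by
  simpa [dirDeriv_apply] using congrArg (eval x) hf.sum_X_mul_pderiv

/-- A linear functional on `K^n`, viewed as a linear form in `n` variables. -/
noncomputable def linForm (l : Module.Dual K (Fin n → K)) : MvPolynomial (Fin n) K :=
  ∑ a, C (l (Pi.single a 1)) * X a

theorem linForm_isHomogeneous (l : Module.Dual K (Fin n → K)) : (linForm l).IsHomogeneous 1 :=
  IsHomogeneous.sum _ _ _ fun _ _ => isHomogeneous_C_mul_X _ _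

theorem sum_mul_apply_single (l : Module.Dual K (Fin n → K)) (x : Fin n → K) :
    ∑ a, l (Pi.single a 1) * x a = l x := by
  conv_rhs => rw [← Finset.univ_sum_single x, map_sum]
  refine Finset.sum_congr rfl fun a _ => ?_
  rw [mul_comm, ← smul_eq_mul, ← map_smul, ← Pi.single_smul, smul_eq_mul, mul_one]

@[simp]
theorem eval_linForm (l : Module.Dual K (Fin n → K)) (x : Fin n → K) :
    eval x (linForm l) = l x := by
  simp [linForm, sum_mul_apply_single]

@[simp]
theorem dirDeriv_linForm (l : Module.Dual K (Fin n → K)) (x v : Fin n → K) :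
    dirDeriv x v (linForm l) = l v := by
  rw [← sum_mul_apply_single, dirDeriv_apply]
  refine Finset.sum_congr rfl fun a _ => ?_
  simp [linForm, pderiv_X, Pi.single_apply, mul_comm]

/-- Restriction of a polynomial to the line `t ↦ x + t v`. -/
noncomputable def lineRestrict (x v : Fin n → K) : MvPolynomial (Fin n) K →ₐ[K] Polynomial K :=
  aeval fun a => Polynomial.C (x a) + Polynomial.X * Polynomial.C (v a)

theorem coeff_zero_lineRestrict (x v : Fin n → K) (f : MvPolynomial (Fin n) K) :
    (lineRestrict x v f).coeff 0 = eval x f := by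
  have : (Polynomial.aeval (0 : K)).comp (lineRestrict x v) = aeval x := by
    ext; simp [lineRestrict]
  simpa [Polynomial.coeff_zero_eq_aeval_zero] using DFunLike.congr_fun this f

theorem lineRestrict_linForm (l : Module.Dual K (Fin n → K)) (x v : Fin n → K) :
    lineRestrict x v (linForm l) = Polynomial.C (l x) + Polynomial.X * Polynomial.C (l v) := by
  rw [← sum_mul_apply_single l x, ← sum_mul_apply_single l v]
  simp only [linForm, map_sum, map_mul, lineRestrict, aeval_X, algHom_C, Finset.mul_sum,
    ← Finset.sum_add_distrib]
  refine Finset.sum_congr rfl fun a _ => ?_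
  simp only [Polynomial.algebraMap_eq]
  ring

theorem exists_dual_eq_zero_ne_zero {x y : Fin n → K} (hxy : ∀ c : K, x ≠ c • y) :
    ∃ l : Module.Dual K (Fin n → K), l y = 0 ∧ l x ≠ 0 := by
  have hx : x ∉ Submodule.span K {y} := by
    rw [Submodule.mem_span_singleton]
    rintro ⟨c, hc⟩
    exact hxy c hc.symm
  obtain ⟨l, hl, hy⟩ := Submodule.exists_le_ker_of_notMem hx
  exact ⟨l, hy (Submodule.mem_span_singleton_self y), hl⟩

theorem exists_dual_ne_zero {x : Fin n → K} (hx : x ≠ 0) :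
    ∃ l : Module.Dual K (Fin n → K), l x ≠ 0 := by
  by_contra! h
  exact hx ((Module.forall_dual_apply_eq_zero_iff K x).mp h)

instance (E : ℕ) : Module.Finite K (homogeneousSubmodule (Fin n) K E) :=
  Module.Finite.of_fg (homogeneousSubmodule_fg (Fin n) K E)

/-- Imposing a linear condition that fails on `V` lowers the dimension. -/
theorem finrank_inf_ker_add_one_le {W : Type*} [AddCommGroup W] [Module K W] (V : Submodule K W)
    [Module.Finite K V] (φ : W →ₗ[K] K) {f : W} (hf : f ∈ V) (hφ : φ f ≠ 0) :
    Module.finrank K ↥(V ⊓ LinearMap.ker φ) + 1 ≤ Module.finrank K V :=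
  Submodule.finrank_lt_finrank_of_lt
    (lt_of_le_of_ne inf_le_left fun h => hφ (h.ge hf).2)

/-- Dimension drop at a common zero of the forms. -/
theorem finrank_add_le_of_common_zero (hn : 2 ≤ n) {m D E N : ℕ} (hND : N ≤ D) (hNE : N ≤ E)
    (Q : Fin m → MvPolynomial (Fin n) K) {x : Fin n → K} (hx : x ≠ 0)
    (hQ : ∀ k, eval x (Q k) = 0)
    (hQE : ∀ G : MvPolynomial (Fin m) K, G.IsHomogeneous D → (aeval Q G).IsHomogeneous E) :
    Module.finrank K ((homogeneousSubmodule (Fin m) K D).map (aeval Q).toLinearMap) + N ≤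
      Module.finrank K (homogeneousSubmodule (Fin n) K E) := by
  obtain ⟨v, hv⟩ : ∃ v : Fin n → K, v ∉ Submodule.span K {x} := by
    by_contra! h
    have h1 := finrank_span_singleton (K := K) hx
    rw [(Submodule.eq_top_iff').mpr h, finrank_top, Module.finrank_fin_fun] at h1
    omega
  obtain ⟨ν, hνx, hνv⟩ := exists_dual_eq_zero_ne_zero (x := v) (y := x)
    fun c hc => hv (Submodule.mem_span_singleton.mpr ⟨c, hc.symm⟩)
  obtain ⟨μ, hμ⟩ := exists_dual_ne_zero hx
  have key : ∀ j ≤ N, ∃ V : Submodule K (MvPolynomial (Fin n) K),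
      V ≤ homogeneousSubmodule (Fin n) K E ∧
      Module.finrank K V + j ≤ Module.finrank K (homogeneousSubmodule (Fin n) K E) ∧
      ∀ f, f.IsHomogeneous E → Polynomial.X ^ j ∣ lineRestrict x v f → f ∈ V := by
    intro j
    induction j with
    | zero => exact fun _ => ⟨homogeneousSubmodule (Fin n) K E, le_rfl, le_rfl, fun f hf _ => hf⟩
    | succ j ih =>
      intro hj
      obtain ⟨V, hVE, hV, hmem⟩ := ih (by omega)
      have : Module.Finite K V := Submodule.finiteDimensional_of_le hVE
      let φ : MvPolynomial (Fin n) K →ₗ[K] K :=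
        Polynomial.lcoeff K j ∘ₗ (lineRestrict x v).toLinearMap
      let f := linForm ν ^ j * linForm μ ^ (E - j)
      have hfE : f.IsHomogeneous E := by
        have := ((linForm_isHomogeneous ν).pow j).mul ((linForm_isHomogeneous μ).pow (E - j))
        rwa [one_mul, one_mul, Nat.add_sub_cancel' (by omega)] at this
      have hres : lineRestrict x v f = Polynomial.X ^ j * (Polynomial.C (ν v) ^ j *
          (Polynomial.C (μ x) + Polynomial.X * Polynomial.C (μ v)) ^ (E - j)) := by
        simp only [f, map_mul, map_pow, lineRestrict_linForm, hνx, map_zero, zero_add]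
        ring
      have hφf : φ f ≠ 0 := by
        simp only [φ, LinearMap.comp_apply, AlgHom.toLinearMap_apply, hres,
          Polynomial.lcoeff_apply]
        have := Polynomial.coeff_X_pow_mul (Polynomial.C (ν v) ^ j *
          (Polynomial.C (μ x) + Polynomial.X * Polynomial.C (μ v)) ^ (E - j)) j 0
        rw [zero_add] at this
        rw [this]
        simp [Polynomial.coeff_zero_eq_eval_zero, hνv, hμ]
      have := finrank_inf_ker_add_one_le V φ (hmem f hfE ⟨_, hres⟩) hφf
      refine ⟨V ⊓ LinearMap.ker φ, inf_le_left.trans hVE, by omega, fun g hg hdvd => ⟨?_, ?_⟩⟩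
      · exact hmem g hg ((pow_dvd_pow _ (Nat.le_succ j)).trans hdvd)
      · exact (Polynomial.X_pow_dvd_iff.mp hdvd) j (Nat.lt_succ_self j)
  obtain ⟨V, hVE, hV, hmem⟩ := key N le_rfl
  have : Module.Finite K V := Submodule.finiteDimensional_of_le hVE
  refine le_trans (Nat.add_le_add_right (Submodule.finrank_mono ?_) N) hV
  rintro _ ⟨G, hG, rfl⟩
  refine hmem _ (hQE G hG) ?_
  have hQX : ∀ k, Polynomial.X ∣ lineRestrict x v (Q k) := fun k =>
    Polynomial.X_dvd_iff.mpr (by rw [coeff_zero_lineRestrict, hQ])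
  change _ ∣ lineRestrict x v (aeval Q G)
  rw [aeval_def, eval₂_eq, map_sum]
  refine Finset.dvd_sum fun d hd => ?_
  have hdeg : d.degree = D := by
    by_contra hne
    exact (mem_support_iff.mp hd) (IsHomogeneous.coeff_eq_zero hG hne)
  rw [map_mul, map_prod]
  refine Dvd.dvd.mul_left ((pow_dvd_pow _ hND).trans ?_) _
  rw [← hdeg, Finsupp.degree_apply, ← Finset.prod_pow_eq_pow_sum]
  refine Finset.prod_dvd_prod_of_dvd _ _ fun k _ => ?_
  rw [map_pow]
  exact pow_dvd_pow_of_dvd (hQX k) _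

theorem MvPolynomial.IsHomogeneous.eval_smul {f : MvPolynomial (Fin n) K} {m : ℕ}
    (hf : f.IsHomogeneous m) (c : K) (x : Fin n → K) : eval (c • x) f = c ^ m * eval x f := by
  rw [eval_eq, eval_eq, Finset.mul_sum]
  refine Finset.sum_congr rfl fun d hd => ?_
  have hdeg : d.degree = m := by
    by_contra hne
    exact (mem_support_iff.mp hd) (hf.coeff_eq_zero hne)
  simp only [Pi.smul_apply, smul_eq_mul, mul_pow, Finset.prod_mul_distrib]
  rw [Finset.prod_pow_eq_pow_sum, ← Finsupp.degree_apply, hdeg]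
  ring

theorem MvPolynomial.IsHomogeneous.eval_zero {f : MvPolynomial (Fin n) K} {m : ℕ}
    (hf : f.IsHomogeneous m) (hm : m ≠ 0) : eval 0 f = 0 := by
  have := hf.eval_smul 0 0
  rwa [zero_smul, zero_pow hm, zero_mul] at this

/-- `f` vanishes at `s` together with its first derivatives. -/
def VanishesDoubly (s : Fin n → K) (f : MvPolynomial (Fin n) K) : Prop :=
  eval s f = 0 ∧ ∀ v, dirDeriv s v f = 0

theorem VanishesDoubly.of_sq_dvd {s : Fin n → K} {l f : MvPolynomial (Fin n) K}
    (hl : eval s l = 0) (h : l ^ 2 ∣ f) : VanishesDoubly s f := by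
  obtain ⟨g, rfl⟩ := h
  refine ⟨by simp [hl], fun v => ?_⟩
  simp [sq, dirDeriv_mul, hl]

/-- If all but few of the forms `P k` vanish at `x`, but not all of them, then some nonzero tangent
direction at `x` is killed by the differentials of all powers `P k ^ r`. -/
theorem exists_dirDeriv_pow_eq_zero [CharZero K] {m δ r : ℕ} (hδ : δ ≠ 0) (hr : 2 ≤ r)
    {P : Fin m → MvPolynomial (Fin n) K} (hP : ∀ k, (P k).IsHomogeneous δ)
    {x : Fin n → K} (hx : ∃ k, eval x (P k) ≠ 0) (H : Finset (Fin m)) (hH : H.card < n)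
    (hPH : ∀ k ∉ H, eval x (P k) = 0) :
    ∃ v : Fin n → K, (∀ c : K, v ≠ c • x) ∧ ∀ k, dirDeriv x v (P k ^ r) = 0 := by
  let L : (Fin n → K) →ₗ[K] (H → K) :=
    LinearMap.pi fun k => ∑ a, (eval x (pderiv a (P k))) • LinearMap.proj a
  have hL : ∀ v k, L v k = dirDeriv x v (P k) := by
    intro v k
    simp [L, dirDeriv_apply, LinearMap.sum_apply, mul_comm]
  have hker : LinearMap.ker L ≠ ⊥ := LinearMap.ker_ne_bot_of_finrank_lt (by simpa using hH)
  obtain ⟨v, hv, hv0⟩ := Submodule.exists_mem_ne_zero_of_ne_bot hker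
  have hvH : ∀ k ∈ H, dirDeriv x v (P k) = 0 := by
    intro k hk
    rw [← hL v ⟨k, hk⟩, LinearMap.mem_ker.mp hv]
    rfl
  refine ⟨v, ?_, fun k => ?_⟩
  · rintro c rfl
    have hc : c ≠ 0 := by
      rintro rfl
      simp at hv0
    obtain ⟨k, hk⟩ := hx
    by_cases hkH : k ∈ H
    · have h1 : dirDeriv x (c • x) (P k) = c * dirDeriv x x (P k) := by
        simp [dirDeriv_apply, Finset.mul_sum, mul_assoc]
      rw [hvH k hkH, dirDeriv_self x (hP k)] at h1
      have hδ' : (δ : K) ≠ 0 := by exact_mod_cast hδ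
      exact mul_ne_zero hc (mul_ne_zero hδ' hk) h1.symm
    · exact hk (hPH k hkH)
  · obtain ⟨s, rfl⟩ : ∃ s, r = s + 1 + 1 := ⟨r - 2, by omega⟩
    rw [dirDeriv_pow_succ]
    by_cases hkH : k ∈ H
    · simp [hvH k hkH]
    · simp [hPH k hkH]

theorem dirDeriv_aeval_eq_zero {m : ℕ} {Q : Fin m → MvPolynomial (Fin n) K} {x v : Fin n → K}
    (hQ : ∀ k, dirDeriv x v (Q k) = 0) (G : MvPolynomial (Fin m) K) :
    dirDeriv x v (aeval Q G) = 0 := by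
  induction G using MvPolynomial.induction_on with
  | C c => simp [dirDeriv_apply]
  | add f g hf hg => rw [map_add, map_add, hf, hg, add_zero]
  | mul_X f k hf => rw [map_mul, aeval_X, dirDeriv_mul, hf, hQ, zero_mul, mul_zero, add_zero]

/-- Away from any finite set of points there is a linear condition satisfied by all polynomials in
the powers `P k ^ r`: it identifies the values at two points, or kills a derivative at a point. -/
theorem exists_linear_condition [IsAlgClosed K] [CharZero K] (hn : 2 ≤ n) {δ r : ℕ} (hδ : δ ≠ 0)
    (hr : 2 ≤ r) {P : Fin (2 * n - 2) → MvPolynomial (Fin n) K}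
    (hP : ∀ k, (P k).IsHomogeneous δ) (hP0 : ∀ x, x ≠ 0 → ∃ k, eval x (P k) ≠ 0)
    (S : Finset (Fin n → K)) (hS : ∀ s ∈ S, s ≠ 0) :
    ∃ (φ : MvPolynomial (Fin n) K →ₗ[K] K) (x y : Fin n → K) (ν : Module.Dual K (Fin n → K))
      (t : K),
      x ≠ 0 ∧ y ≠ 0 ∧ t ≠ 0 ∧ (∀ s ∈ S, ∀ c : K, x ≠ c • s) ∧
      (∀ G : MvPolynomial (Fin (2 * n - 2)) K, φ (aeval (fun k => P k ^ r) G) = 0) ∧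
      (∀ f, VanishesDoubly x f → VanishesDoubly y f → φ f = 0) ∧
      ∀ g, φ (g * linForm ν) = eval x g * t := by
  obtain ⟨l, hl⟩ := Module.exists_dual_forall_apply_ne_zero (K := K) (fun s : S => (s : Fin n → K))
    fun s => hS s s.2
  obtain ⟨ζ, hζ⟩ : ∃ ζ : K, IsPrimitiveRoot ζ r := by
    have : NeZero (r : K) := ⟨by exact_mod_cast (by omega : r ≠ 0)⟩
    exact HasEnoughRootsOfUnity.exists_primitiveRoot K r
  let c : Fin (2 * n - 2) → K := fun k => if (k : ℕ) < n - 1 then ζ else 1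
  have hc : ∀ k, c k ^ r = 1 := by
    intro k
    by_cases hk : (k : ℕ) < n - 1 <;> simp [c, hk, hζ.pow_eq_one]
  let F : Option (Fin (2 * n - 2)) → MvPolynomial (Fin n ⊕ Fin n) K := fun o =>
    o.elim (rename Sum.inl (linForm l)) fun k =>
      rename Sum.inl (P k) - C (c k) * rename Sum.inr (P k)
  obtain ⟨z, hz0, hz⟩ := MvPolynomial.exists_ne_zero_forall_eval_eq_zero
    (by simp; omega) F (by
      have h0 : ∀ f : Fin n → Fin n ⊕ Fin n, (0 : Fin n ⊕ Fin n → K) ∘ f = 0 := fun _ => rfl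
      rintro (_ | k)
      · simp only [F, Option.elim, eval_rename, h0, eval_linForm, map_zero]
      · simp only [F, Option.elim, map_sub, map_mul, eval_rename, h0, (hP k).eval_zero hδ,
          mul_zero, sub_zero])
  set x : Fin n → K := z ∘ Sum.inl
  set y : Fin n → K := z ∘ Sum.inr
  have hlx : l x = 0 := by simpa [F, eval_rename] using hz none
  have hxy : ∀ k, eval x (P k) = c k * eval y (P k) := fun k =>
    sub_eq_zero.mp (by simpa [F, eval_rename] using hz (some k))
  have hx0 : x ≠ 0 := by
    intro h0
    have hy0 : y ≠ 0 := by
      intro h1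
      refine hz0 (funext fun a => ?_)
      rcases a with a | a
      · exact congrFun h0 a
      · exact congrFun h1 a
    obtain ⟨k, hk⟩ := hP0 y hy0
    have := hxy k
    rw [h0, (hP k).eval_zero hδ] at this
    have hck : c k ≠ 0 := fun h => by
      have := hc k
      rw [h, zero_pow (by omega)] at this
      exact zero_ne_one this
    exact (mul_ne_zero hck hk) this.symm
  have hxS : ∀ s ∈ S, ∀ c : K, x ≠ c • s := by
    intro s hs c hcs
    rw [hcs, map_smul, smul_eq_mul, mul_eq_zero] at hlx
    rcases hlx with h | h
    · exact hx0 (by rw [hcs, h, zero_smul])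
    · exact hl ⟨s, hs⟩ h
  by_cases hprop : ∃ b : K, y = b • x
  · obtain ⟨b, hb⟩ := hprop
    have hbk : ∀ k, eval x (P k) = 0 ∨ c k * b ^ δ = 1 := by
      intro k
      have := hxy k
      rw [hb, (hP k).eval_smul] at this
      by_cases h : eval x (P k) = 0
      · exact Or.inl h
      · refine Or.inr (mul_right_cancel₀ h ?_)
        rw [one_mul, mul_assoc, ← this]
    have hcardlt :
        (Finset.univ.filter fun k : Fin (2 * n - 2) => (k : ℕ) < n - 1).card = n - 1 := by
      rw [Fin.card_filter_val_lt]; omega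
    obtain ⟨H, hH, hPH⟩ : ∃ H : Finset (Fin (2 * n - 2)), H.card < n ∧
        ∀ k ∉ H, eval x (P k) = 0 := by
      by_cases hb1 : b ^ δ = 1
      · refine ⟨Finset.univ.filter fun k => ¬ (k : ℕ) < n - 1, ?_, fun k hk => ?_⟩
        · have := Finset.card_filter_add_card_filter_not (s := Finset.univ)
            (fun k : Fin (2 * n - 2) => (k : ℕ) < n - 1)
          rw [hcardlt, Finset.card_univ, Fintype.card_fin] at this
          omega
        · refine (hbk k).resolve_right fun h => ?_
          have hk' : (k : ℕ) < n - 1 := by simp at hk; omega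
          simp only [c, hk', if_true, hb1, mul_one] at h
          exact hζ.ne_one (by omega) h
      · refine ⟨Finset.univ.filter fun k => (k : ℕ) < n - 1, by omega, fun k hk => ?_⟩
        refine (hbk k).resolve_right fun h => ?_
        have hk' : ¬ (k : ℕ) < n - 1 := by simp at hk; omega
        simp only [c, hk', if_false, one_mul] at h
        exact hb1 h
    obtain ⟨v, hvx, hv⟩ := exists_dirDeriv_pow_eq_zero hδ hr hP (hP0 x hx0) H hH hPH
    obtain ⟨ν, hνx, hνv⟩ := exists_dual_eq_zero_ne_zero hvx
    refine ⟨dirDeriv x v, x, x, ν, ν v, hx0, hx0, hνv, hxS, dirDeriv_aeval_eq_zero hv,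
      fun f hf _ => hf.2 v, fun g => ?_⟩
    simp [dirDeriv_mul, hνx]
  · push Not at hprop
    have hy0 : y ≠ 0 := fun h => hprop 0 (by rw [h, zero_smul])
    have hxy' : ∀ b : K, x ≠ b • y := by
      intro b hb
      have hb0 : b ≠ 0 := by
        rintro rfl
        exact hx0 (by rw [hb, zero_smul])
      exact hprop b⁻¹ (by rw [hb, smul_smul, inv_mul_cancel₀ hb0, one_smul])
    obtain ⟨ν, hνy, hνx⟩ := exists_dual_eq_zero_ne_zero hxy'
    refine ⟨(aeval x).toLinearMap - (aeval y).toLinearMap, x, y, ν, ν x, hx0, hy0, hνx, hxS,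
      fun G => ?_, fun f hf hf' => ?_, fun g => ?_⟩
    · have : (aeval x).comp (aeval (R := K) fun k => P k ^ r) =
          (aeval y).comp (aeval (R := K) fun k => P k ^ r) := by
        ext k
        simp [aeval_eq_eval, hxy k, mul_pow, hc k]
      exact sub_eq_zero.mpr (DFunLike.congr_fun this G)
    · simp [aeval_eq_eval, hf.1, hf'.1]
    · simp [aeval_eq_eval, hνy]

/-- The forms of degree `D` in the powers `P k ^ r` of `2n - 2` forms in `n` variables span a
subspace of large codimension. -/
theorem finrank_map_aeval_pow_add_le [IsAlgClosed K] [CharZero K] (hn : 2 ≤ n) {δ r D N : ℕ}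
    (hδ : δ ≠ 0) (hr : 2 ≤ r) (hD : 4 * N ≤ D) {P : Fin (2 * n - 2) → MvPolynomial (Fin n) K}
    (hP : ∀ k, (P k).IsHomogeneous δ) :
    Module.finrank K ((homogeneousSubmodule (Fin (2 * n - 2)) K D).map
        (aeval fun k => P k ^ r).toLinearMap) + N ≤
      Module.finrank K (homogeneousSubmodule (Fin n) K (δ * r * D)) := by
  set E := δ * r * D
  have hDE : D ≤ E := Nat.le_mul_of_pos_left D (Nat.mul_pos (Nat.pos_of_ne_zero hδ) (by omega))
  have hQE : ∀ G : MvPolynomial (Fin (2 * n - 2)) K, G.IsHomogeneous D →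
      (aeval (fun k => P k ^ r) G).IsHomogeneous E := fun G hG =>
    hG.aeval _ fun k => (hP k).pow r
  by_cases hP0 : ∀ x, x ≠ 0 → ∃ k, eval x (P k) ≠ 0
  swap
  · push Not at hP0
    obtain ⟨x, hx, hPx⟩ := hP0
    exact finrank_add_le_of_common_zero hn (by omega) (by omega) _ hx
      (fun k => by simp [hPx k, show r ≠ 0 by omega]) hQE
  have key : ∀ j ≤ N, ∃ (V : Submodule K (MvPolynomial (Fin n) K)) (S : Finset (Fin n → K)),
      V ≤ homogeneousSubmodule (Fin n) K E ∧
      Module.finrank K V + j ≤ Module.finrank K (homogeneousSubmodule (Fin n) K E) ∧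
      (∀ G : MvPolynomial (Fin (2 * n - 2)) K, G.IsHomogeneous D →
        aeval (fun k => P k ^ r) G ∈ V) ∧
      S.card ≤ 2 * j ∧ (∀ s ∈ S, s ≠ 0) ∧
      ∀ f, f.IsHomogeneous E → (∀ s ∈ S, VanishesDoubly s f) → f ∈ V := by
    classical
    intro j
    induction j with
    | zero => exact fun _ => ⟨homogeneousSubmodule (Fin n) K E, ∅, le_rfl, le_rfl, hQE, by simp,
        by simp, fun f hf _ => hf⟩
    | succ j ih =>
      intro hj
      obtain ⟨V, S, hVE, hV, hGV, hScard, hS, hmem⟩ := ih (by omega)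
      have : Module.Finite K V := Submodule.finiteDimensional_of_le hVE
      obtain ⟨φ, x, y, ν, t, hx, hy, ht, hxS, hφG, hφ, hφν⟩ :=
        exists_linear_condition hn hδ hr hP hP0 S hS
      choose! l hls hlx using fun s hs => exists_dual_eq_zero_ne_zero (hxS s hs)
      obtain ⟨μ, hμ⟩ := exists_dual_ne_zero hx
      let g := (∏ s ∈ S, linForm (l s) ^ 2) * linForm μ ^ (E - 1 - 2 * S.card)
      have hgE : (g * linForm ν).IsHomogeneous E := by
        have h1 : (∏ s ∈ S, linForm (l s) ^ 2).IsHomogeneous (∑ s ∈ S, 1 * 2) :=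
          IsHomogeneous.prod _ _ _ fun s _ => (linForm_isHomogeneous (l s)).pow 2
        have h2 := (h1.mul ((linForm_isHomogeneous μ).pow (E - 1 - 2 * S.card))).mul
          (linForm_isHomogeneous ν)
        simp only [Finset.sum_const, smul_eq_mul] at h2
        rwa [show S.card * (1 * 2) + 1 * (E - 1 - 2 * S.card) + 1 = E by omega] at h2
      have hgV : g * linForm ν ∈ V := by
        refine hmem _ hgE fun s hs => VanishesDoubly.of_sq_dvd (l := linForm (l s)) ?_ ?_
        · rw [eval_linForm, hls s hs]
        · exact ((Finset.dvd_prod_of_mem _ hs).mul_right _).mul_right _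
      have hgφ : φ (g * linForm ν) ≠ 0 := by
        rw [hφν]
        refine mul_ne_zero ?_ ht
        simp only [g, map_mul, map_prod, map_pow, eval_linForm]
        exact mul_ne_zero (Finset.prod_ne_zero_iff.mpr fun s hs => pow_ne_zero _ (hlx s hs))
          (pow_ne_zero _ hμ)
      have hdrop := finrank_inf_ker_add_one_le V φ hgV hgφ
      refine ⟨V ⊓ LinearMap.ker φ, insert x (insert y S), inf_le_left.trans hVE, by omega,
        fun G hG => ⟨hGV G hG, hφG G⟩, ?_, ?_, fun f hf hfS => ⟨hmem f hf fun s hs => ?_, ?_⟩⟩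
      · have h1 := Finset.card_insert_le x (insert y S)
        have h2 := Finset.card_insert_le y S
        omega
      · simp only [Finset.mem_insert, forall_eq_or_imp]
        exact ⟨hx, hy, hS⟩
      · exact hfS s (by simp [hs])
      · exact hφ f (hfS x (by simp)) (hfS y (by simp))
  obtain ⟨V, S, hVE, hV, hGV, -⟩ := key N le_rfl
  have : Module.Finite K V := Submodule.finiteDimensional_of_le hVE
  refine le_trans (Nat.add_le_add_right (Submodule.finrank_mono ?_) N) hV
  rintro _ ⟨G, hG, rfl⟩
  exact hGV G hG

end

noncomputable instance (n δ : ℕ) : Fintype {α : Fin n →₀ ℕ // α.degree = δ} :=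
  (Finsupp.finite_of_degree_eq δ).fintype

/-- The number of coefficients of an `m`-tuple of forms of degree `δ` in `n` variables. -/
noncomputable def coeffCount (m n δ : ℕ) : ℕ :=
  Fintype.card (Fin m × {α : Fin n →₀ ℕ // α.degree = δ})

/-- The `m`-tuple of forms of degree `δ` in `n` variables with indeterminate coefficients. -/
noncomputable def genericForm (m n δ : ℕ) (k : Fin m) : MvPolynomial (Fin n)
    (MvPolynomial (Fin m × {α : Fin n →₀ ℕ // α.degree = δ}) ℝ) :=
  ∑ α : {α : Fin n →₀ ℕ // α.degree = δ}, monomial (α : Fin n →₀ ℕ) (X (k, α))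

theorem genericForm_isHomogeneous (m n δ : ℕ) (k : Fin m) :
    (genericForm m n δ k).IsHomogeneous δ :=
  IsHomogeneous.sum _ _ _ fun α _ => isHomogeneous_monomial _ α.2

theorem map_genericForm {m n δ : ℕ} {P : Fin m → MvPolynomial (Fin n) ℝ}
    (hP : ∀ k, (P k).IsHomogeneous δ) (k : Fin m) :
    map (aeval (R := ℝ) (S₁ := ℝ)
      fun u : Fin m × {α : Fin n →₀ ℕ // α.degree = δ} => coeff u.2 (P u.1)).toRingHom
      (genericForm m n δ k) = P k := by
  classical
  ext β
  simp only [genericForm, map_sum, map_monomial, coeff_sum, coeff_monomial]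
  by_cases hβ : β.degree = δ
  · rw [Finset.sum_eq_single ⟨β, hβ⟩]
    · simp
    · intro α _ hα
      exact if_neg fun h => hα (Subtype.ext h)
    · simp
  · rw [(hP k).coeff_eq_zero hβ]
    exact Finset.sum_eq_zero fun α _ =>
      if_neg fun h : (α : Fin n →₀ ℕ) = β => hβ (h ▸ α.2)

theorem trdeg_algebraicClosure_fractionRing_le (σ : Type) [Fintype σ] :
    Algebra.trdeg ℝ (AlgebraicClosure (FractionRing (MvPolynomial σ ℝ))) ≤
      (Fintype.card σ : ℕ) := by
  have hF : Algebra.trdeg ℝ (FractionRing (MvPolynomial σ ℝ)) = (Fintype.card σ : ℕ) := by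
    have : Algebra.IsAlgebraic (MvPolynomial σ ℝ) (FractionRing (MvPolynomial σ ℝ)) :=
      IsLocalization.isAlgebraic _ (nonZeroDivisors (MvPolynomial σ ℝ))
    rw [← trdeg_add_eq ℝ (MvPolynomial σ ℝ), trdeg_eq_zero (R := MvPolynomial σ ℝ), add_zero,
      MvPolynomial.trdeg_of_isDomain]
    simp
  rw [← trdeg_add_eq ℝ (FractionRing (MvPolynomial σ ℝ)),
    trdeg_eq_zero (R := FractionRing (MvPolynomial σ ℝ)), add_zero, hF]

theorem finrank_homogeneousSubmodule_le {K : Type*} [Field K] (n E : ℕ) :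
    Module.finrank K (homogeneousSubmodule (Fin n) K E) ≤
      Fintype.card {α : Fin n →₀ ℕ // α.degree = E} := by
  let L : homogeneousSubmodule (Fin n) K E →ₗ[K] ({α : Fin n →₀ ℕ // α.degree = E} → K) :=
    (LinearMap.pi fun α : {α : Fin n →₀ ℕ // α.degree = E} => lcoeff K (α : Fin n →₀ ℕ)) ∘ₗ
      Submodule.subtype _
  have hL : Function.Injective L := by
    refine (injective_iff_map_eq_zero L).mpr fun f hf =>
      Subtype.ext (MvPolynomial.ext _ _ fun α => ?_)
    by_cases hα : α.degree = E
    · exact congrFun hf ⟨α, hα⟩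
    · exact IsHomogeneous.coeff_eq_zero f.2 hα
  simpa using LinearMap.finrank_le_finrank_of_injective hL

/-- A nonzero polynomial relation between the coefficients of all forms of degree `D` in the `r`-th
powers of `2n - 2` forms of degree `δ` in `n` variables. -/
theorem exists_relation_coeff_aeval_pow {m n δ r D : ℕ} (hm : m = 2 * n - 2) (hn : 2 ≤ n)
    (hδ : δ ≠ 0) (hr : 2 ≤ r) (hD : 4 * (coeffCount m n δ + 1) ≤ D) :
    ∃ q : MvPolynomial {α : Fin n →₀ ℕ // α.degree = δ * r * D} ℝ, q ≠ 0 ∧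
      ∀ P : Fin m → MvPolynomial (Fin n) ℝ, (∀ k, (P k).IsHomogeneous δ) →
      ∀ G : MvPolynomial (Fin m) ℝ, G.IsHomogeneous D →
        aeval (fun α : {α : Fin n →₀ ℕ // α.degree = δ * r * D} =>
          coeff (α : Fin n →₀ ℕ) (aeval (fun k => P k ^ r) G)) q = 0 := by
  subst hm
  let A := MvPolynomial (Fin (2 * n - 2) × {α : Fin n →₀ ℕ // α.degree = δ}) ℝ
  let K := AlgebraicClosure (FractionRing A)
  let ι : A →ₐ[ℝ] K := IsScalarTower.toAlgHom ℝ A K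
  have hι : Function.Injective ι := by
    change Function.Injective (algebraMap A K)
    rw [IsScalarTower.algebraMap_eq A (FractionRing A) K]
    exact (algebraMap (FractionRing A) K).injective.comp
      (IsFractionRing.injective A (FractionRing A))
  have : CharZero K := charZero_of_injective_algebraMap (algebraMap ℝ K).injective
  let PA := genericForm (2 * n - 2) n δ
  let PK : Fin (2 * n - 2) → MvPolynomial (Fin n) K := fun k => mapAlgHom ι (PA k)
  have hPK : ∀ k, (PK k).IsHomogeneous δ := fun k =>
    (genericForm_isHomogeneous _ _ _ k).map (ι : A →+* K)
  let coeffs : MvPolynomial (Fin n) K →ₗ[K] ({α : Fin n →₀ ℕ // α.degree = δ * r * D} → K) :=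
    LinearMap.pi fun α => lcoeff K (α : Fin n →₀ ℕ)
  let H := (homogeneousSubmodule (Fin (2 * n - 2)) K D).map (aeval fun k => PK k ^ r).toLinearMap
  have hcodim := finrank_map_aeval_pow_add_le hn hδ hr hD hPK
  have hU : Module.finrank K (H.map coeffs) + coeffCount (2 * n - 2) n δ <
      Fintype.card {α : Fin n →₀ ℕ // α.degree = δ * r * D} := by
    have h1 := Submodule.finrank_map_le coeffs H
    have h2 := finrank_homogeneousSubmodule_le (K := K) n (δ * r * D)
    change Module.finrank K H + _ ≤ _ at hcodim
    omega
  obtain ⟨q, hq0, hq⟩ := exists_ne_zero_aeval_eq_zero_of_finrank_add_lt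
    (trdeg_algebraicClosure_fractionRing_le _) (H.map coeffs) hU
  refine ⟨q, hq0, fun P hP G hG => ?_⟩
  let ev : A →ₐ[ℝ] ℝ := aeval fun u => coeff u.2 (P u.1)
  let f : MvPolynomial (Fin n) A := aeval (fun k => PA k ^ r) G
  have hfK : mapAlgHom ι f = aeval (fun k => PK k ^ r) (map (algebraMap ℝ K) G) := by
    rw [comp_aeval_apply, aeval_map_algebraMap]
    simp [PK]
  have hfP : mapAlgHom ev f = aeval (fun k => P k ^ r) G := by
    rw [comp_aeval_apply]
    refine congrArg (fun g => aeval g G) (funext fun k => ?_)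
    rw [map_pow]
    exact congrArg (· ^ r) (map_genericForm hP k)
  have hA : aeval (fun α : {α : Fin n →₀ ℕ // α.degree = δ * r * D} =>
      coeff (α : Fin n →₀ ℕ) f) q = 0 := by
    refine hι ?_
    rw [comp_aeval_apply, map_zero]
    have hmem : coeffs (mapAlgHom ι f) ∈ H.map coeffs := by
      rw [hfK]
      exact ⟨_, ⟨_, hG.map _, rfl⟩, rfl⟩
    have hcoeffs : (fun α : {α : Fin n →₀ ℕ // α.degree = δ * r * D} =>
        ι (coeff (α : Fin n →₀ ℕ) f)) =
        coeffs (mapAlgHom ι f) := funext fun α => (coeff_map _ _ _).symm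
    rw [hcoeffs]
    exact hq _ hmem
  have := congrArg ev hA
  rw [comp_aeval_apply, map_zero] at this
  rw [← hfP]
  convert this using 3
  simp [coeff_map]

theorem net_succ_isHomogeneous (r : ℕ) (d : ℕ → ℕ)
    (W : ∀ j : ℕ, Matrix (Fin (d (j + 1))) (Fin (d j)) ℝ) (h : ℕ) (j : Fin (d (h + 1))) :
    (net r d W (h + 1) j).IsHomogeneous (r ^ h) := by
  induction h with
  | zero =>
    refine IsHomogeneous.sum _ _ _ fun k _ => IsHomogeneous.C_mul ?_ _
    simpa [net] using isHomogeneous_X ℝ k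
  | succ h ih =>
    refine IsHomogeneous.sum _ _ _ fun k _ => IsHomogeneous.C_mul ?_ _
    simpa [pow_succ] using (ih k).pow r

/-- The part of the network after layer `i` computes a form in the activations of layer `i`. -/
theorem exists_net_eq_aeval_pow (r : ℕ) (d : ℕ → ℕ)
    (W : ∀ j : ℕ, Matrix (Fin (d (j + 1))) (Fin (d j)) ℝ) {i : ℕ} (hi : i ≠ 0) (s : ℕ)
    (j : Fin (d (i + 1 + s))) :
    ∃ G : MvPolynomial (Fin (d i)) ℝ, G.IsHomogeneous (r ^ s) ∧
      net r d W (i + 1 + s) j = aeval (fun k => net r d W i k ^ r) G := by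
  induction s with
  | zero =>
    refine ⟨∑ k, C (W i j k) * X k,
      IsHomogeneous.sum _ _ _ fun k _ => isHomogeneous_C_mul_X _ _, ?_⟩
    simp [net, hi]
  | succ s ih =>
    choose G hG hnet using ih
    refine ⟨∑ k, C (W (i + 1 + s) j k) * G k ^ r, IsHomogeneous.sum _ _ _ fun k _ =>
      IsHomogeneous.C_mul (by simpa [pow_succ] using (hG k).pow r) _, ?_⟩
    change ∑ k, C (W (i + 1 + s) j k) * net r d W (i + 1 + s) k ^
      (if i + 1 + s = 0 then 1 else r) = _
    rw [if_neg (show ¬ (i + 1 + s = 0) by omega)]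
    simp only [hnet, map_sum, map_mul, map_pow, algHom_C, algebraMap_eq]

/-- Bottlenecks, unconditional part: for `r ≥ 2`, `d₀ ≥ 2`, `i ≥ 1`, the
width `d_i = 2d₀ - 2` is an asymptotic bottleneck: there is `h̃ ≥ i` such that for every
depth `h > h̃` and all other widths, the architecture with `d 0 = d₀` and `d i = 2d₀ - 2`
is non-filling, i.e. some polynomial function of the coefficients vanishes identically on
the functional space but not on the whole ambient space `Sym_{r^{h-1}}(ℝ^{d₀})^{d_h}`. -/
theorem width_2d0_minus_2_is_asymptotic_bottleneck
    (r d0 i : ℕ) (hr : 2 ≤ r) (hd0 : 2 ≤ d0) (hi : 1 ≤ i) :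
    ∃ ht : ℕ, i ≤ ht ∧
      ∀ h : ℕ, ht < h →
        ∀ d : ℕ → ℕ, (∀ j, 0 < d j) → d 0 = d0 → d i = 2 * d0 - 2 →
          ∃ q : MvPolynomial (Fin (d h) × (Fin (d 0) →₀ ℕ)) ℝ,
            (∀ W : ∀ j : ℕ, Matrix (Fin (d (j + 1))) (Fin (d j)) ℝ,
              MvPolynomial.eval
                (fun jm => MvPolynomial.coeff jm.2 (net r d W h jm.1)) q = 0) ∧
            ∃ p : Fin (d h) → MvPolynomial (Fin (d 0)) ℝ,
              (∀ j, (p j).IsHomogeneous (r ^ (h - 1))) ∧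
              MvPolynomial.eval (fun jm => MvPolynomial.coeff jm.2 (p jm.1)) q ≠ 0 := by
  refine ⟨i + 1 + 4 * (coeffCount (2 * d0 - 2) d0 (r ^ (i - 1)) + 1), by omega, ?_⟩
  intro h hh d hpos h0 hdi
  subst h0
  obtain ⟨s, rfl⟩ : ∃ s, h = i + 1 + s := ⟨h - (i + 1), by omega⟩
  have hD : 4 * (coeffCount (d i) (d 0) (r ^ (i - 1)) + 1) ≤ r ^ s := by
    rw [hdi]
    have := Nat.lt_pow_self (n := s) (show 1 < r by omega)
    omega
  obtain ⟨q, hq0, hq⟩ := exists_relation_coeff_aeval_pow (r := r) hdi hd0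
    (pow_ne_zero _ (by omega)) hr hD
  have hE : r ^ (i - 1) * r * r ^ s = r ^ (i + 1 + s - 1) := by
    rw [← pow_succ, ← pow_add]
    congr 1
    omega
  let j0 : Fin (d (i + 1 + s)) := ⟨0, hpos _⟩
  refine ⟨rename (fun α : {α : Fin (d 0) →₀ ℕ // α.degree = r ^ (i - 1) * r * r ^ s} =>
    (j0, (α : Fin (d 0) →₀ ℕ))) q, fun W => ?_, ?_⟩
  · obtain ⟨G, hG, hnet⟩ := exists_net_eq_aeval_pow r d W (by omega : i ≠ 0) s j0
    have hP : ∀ k, (net r d W i k).IsHomogeneous (r ^ (i - 1)) := by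
      obtain ⟨t, rfl⟩ : ∃ t, i = t + 1 := ⟨i - 1, by omega⟩
      exact net_succ_isHomogeneous r d W t
    have := hq _ hP G hG
    rw [← hnet] at this
    rw [eval_rename]
    exact this
  · obtain ⟨c, hc⟩ : ∃ c, eval c q ≠ 0 := by
      by_contra! hall
      exact hq0 (MvPolynomial.funext fun c => by rw [hall c, map_zero])
    refine ⟨fun _ => ∑ α : {α : Fin (d 0) →₀ ℕ // α.degree = r ^ (i - 1) * r * r ^ s},
      monomial (α : Fin (d 0) →₀ ℕ) (c α), fun _ => ?_, ?_⟩
    · rw [← hE]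
      exact IsHomogeneous.sum _ _ _ fun α _ => isHomogeneous_monomial _ α.2
    · rw [eval_rename]
      convert hc using 3
      funext β
      classical
      simp only [Function.comp_apply, coeff_sum, coeff_monomial]
      rw [Finset.sum_eq_single β]
      · simp
      · intro α _ hα
        exact if_neg fun h => hα (Subtype.ext h)
      · simp
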